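/- Kontsevich's vanishing lemmas: (1) For every pair of distinct points z₁, z₂ in the open upper half-plane ℍ⁺, the integral ∫_{z ∈ ℍ⁺ ∖ {z₁,z₂}} dφ(z₁,z) ∧ dφ(z,z₂) equals 0. (2) For every z₁ ∈ ℍ⁺ and z₂ ∈ ℝ = ∂ℍ⁺, the integral ∫_{z ∈ ℍ⁺ ∖ {z₁}} dφ(z₁,z) ∧ dφ(z,z₂) equals 0. (3) For every z₀ ∈ ℍ⁺, the integral ∫_{z ∈ ℍ⁺ ∖ {z₀}} dφ(z₀,z) ∧ dφ(z,z₀) equals 0. -/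

import Mathlib

open scoped Classical

noncomputable section

open MeasureTheory

/-- Kontsevich's hyperbolic angle function
`φ(z,w) = (1/2π) arg((z−w)/(z̄−w))` on the closed upper half-plane. -/
def hyperbolicAngle (z w : ℂ) : ℝ :=
  (1 / (2 * Real.pi)) * Complex.arg ((z - w) / ((starRingEnd ℂ) z - w))

/-- The coefficient of the 2-form `df ∧ dg` on `ℂ ≅ ℝ²` with respect to the standard
area form `dx ∧ dy`, namely `(∂f/∂x)(∂g/∂y) − (∂f/∂y)(∂g/∂x)`; integrating it over a
region is integrating the 2-form `df ∧ dg`. -/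
def wedgeCoeff (f g : ℂ → ℝ) (z : ℂ) : ℝ :=
  fderiv ℝ f z 1 * fderiv ℝ g z Complex.I - fderiv ℝ f z Complex.I * fderiv ℝ g z 1

open scoped ComplexConjugate

/-- kernel -/
def hk (p q z : ℂ) : ℝ := (1 / ((z - p) * conj (z - q))).im

lemma hk_conj (p q z : ℂ) : hk p q (conj z) = - hk (conj p) (conj q) z := by
  unfold hk
  rw [← Complex.conj_im]
  simp

lemma hk_shift (p q z : ℂ) : hk p q (z + q) = hk (p - q) 0 z := by
  unfold hk
  rw [show z + q - p = z - (p - q) by ring, show z + q - q = z - 0 by ring]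

lemma hk_zero (z : ℂ) : hk 0 0 z = 0 := by
  unfold hk
  rw [sub_zero, Complex.mul_conj, one_div, ← Complex.ofReal_inv, Complex.ofReal_im]

lemma hk_integral0 (a : ℂ) : ∫ z, hk a 0 z = 0 := by
  by_cases ha : a = 0
  · subst ha; simp [hk_zero]
  have hac : conj a ≠ 0 := by simpa using ha
  have hu : ‖a / conj a‖ = 1 := by
    rw [norm_div, Complex.norm_conj, div_self]; simpa using ha
  let c : Circle := ⟨a / conj a, mem_sphere_zero_iff_norm.2 hu⟩
  let e : ℂ ≃ₗᵢ[ℝ] ℂ := Complex.conjLIE.trans (rotation c)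
  have he : ∀ z, e z = a / conj a * conj z := fun z => by
    exact rotation_apply c (conj z)
  have h1 : ∫ z, hk a 0 (e z) = ∫ z, hk a 0 z :=
    e.measurePreserving.integral_comp e.toHomeomorph.measurableEmbedding _
  have h2 : ∀ z, hk a 0 (e z) = - hk a 0 z := by
    intro z
    unfold hk
    rw [← Complex.conj_im, he]
    congr 1
    rw [map_div₀, map_one, map_mul, Complex.conj_conj]
    congr 1
    simp only [map_sub, map_mul, map_div₀, Complex.conj_conj, sub_zero, map_zero]
    field_simp
  simp only [h2, integral_neg] at h1
  linarith

lemma hk_integral (p q : ℂ) : ∫ z, hk p q z = 0 := by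
  rw [← integral_add_right_eq_self _ q]
  simp only [hk_shift, hk_integral0]

lemma g_int : Integrable (fun z : ℂ => (‖z‖ * (1 + ‖z‖ ^ 2))⁻¹) := by
  have := (integrable_fun_norm_addHaar (E := ℂ) volume
    (f := fun r : ℝ => (r * (1 + r ^ 2))⁻¹)).2 ?_
  · exact this
  · rw [Complex.finrank_real_complex]
    refine (integrable_inv_one_add_sq.integrableOn (s := Set.Ioi 0)).congr_fun ?_ measurableSet_Ioi
    intro r hr
    have : r ≠ 0 := ne_of_gt hr
    simp only [smul_eq_mul]
    field_simp
    norm_num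

lemma hk_bound1 (a z : ℂ) : |hk a 0 z| ≤ 1 / (‖z - a‖ * ‖z‖) := by
  unfold hk
  refine (Complex.abs_im_le_norm _).trans ?_
  simp

lemma hk_bound2 (a z : ℂ) : |hk a 0 z| ≤ ‖a‖ / (‖z - a‖ * ‖z‖ ^ 2) := by
  by_cases hz : z = 0
  · simp [hz, hk]
  by_cases hza : z - a = 0
  · simp [hza, hk]
  have hzc : conj z ≠ 0 := by simpa using hz
  have : hk a 0 z = (a / ((z - a) * (z * conj z))).im := by
    have h0 := hk_zero z
    unfold hk at *
    rw [← sub_zero (Complex.im _), ← h0, ← Complex.sub_im]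
    congr 1
    simp only [sub_zero]
    field_simp
    ring
  rw [this]
  refine (Complex.abs_im_le_norm _).trans ?_
  simp [pow_two]

lemma real_bound (s t c h : ℝ) (hs : 0 < s) (ht : 0 < t) (hc : 0 < c) (hh : 0 ≤ h)
    (hst : c ≤ s + t) (h1 : h ≤ 1 / (t * s)) (h2 : h ≤ c / (t * s ^ 2)) :
    h ≤ (8 / c + 2 * c) * ((s * (1 + s ^ 2))⁻¹ + (t * (1 + t ^ 2))⁻¹) := by
  have hA : 0 < 8 / c + 2 * c := by positivity
  rw [le_div_iff₀ (by positivity)] at h1 h2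
  rcases le_total s t with hle | hle
  · have : h ≤ (8 / c + 2 * c) * (s * (1 + s ^ 2))⁻¹ := by
      rw [← div_eq_mul_inv, le_div_iff₀ (by positivity)]
      have e1 : h * s ≤ 8 / c := by
        rw [le_div_iff₀ hc]
        nlinarith [mul_nonneg hh hs.le]
      have e2 : h * s ^ 3 ≤ c := by
        nlinarith [mul_nonneg (mul_nonneg hh (sq_nonneg s)) (sub_nonneg.2 hle)]
      nlinarith
    refine this.trans ?_
    gcongr
    simp; positivity
  · have : h ≤ (8 / c + 2 * c) * (t * (1 + t ^ 2))⁻¹ := by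
      rw [← div_eq_mul_inv, le_div_iff₀ (by positivity)]
      have e1 : h * t ≤ 8 / c := by
        rw [le_div_iff₀ hc]
        have : c ^ 2 ≤ 4 * s ^ 2 := by nlinarith
        have h3 : h * t * c ^ 2 ≤ 4 * c := by
          nlinarith [mul_nonneg (mul_nonneg hh ht.le) (sub_nonneg.2 this)]
        nlinarith
      have e2 : h * t ^ 3 ≤ c := by
        have : t ^ 2 ≤ s ^ 2 := by nlinarith
        nlinarith [mul_nonneg (mul_nonneg hh ht.le) (sub_nonneg.2 this)]
      nlinarith
    refine this.trans ?_
    gcongr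
    simp; positivity

lemma hk_meas (p q : ℂ) : Measurable (hk p q) := by
  unfold hk
  have : Measurable (fun z : ℂ => conj (z - q)) :=
    Complex.continuous_conj.measurable.comp (by fun_prop)
  exact Complex.measurable_im.comp
    (measurable_const.div ((measurable_id.sub_const p).mul this))

lemma hk_int0 (a : ℂ) : Integrable (hk a 0) := by
  by_cases ha : a = 0
  · subst ha
    have : hk 0 0 = fun _ => 0 := funext hk_zero
    rw [this]; exact integrable_zero _ _ _
  have hg := (g_int.add (g_int.comp_sub_right a)).const_mul (8 / ‖a‖ + 2 * ‖a‖)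
  refine hg.mono' (hk_meas _ _).aestronglyMeasurable (Filter.Eventually.of_forall fun z => ?_)
  rw [Real.norm_eq_abs]
  have hrhs : 0 ≤ (8 / ‖a‖ + 2 * ‖a‖) *
    ((‖z‖ * (1 + ‖z‖ ^ 2))⁻¹ + (‖z - a‖ * (1 + ‖z - a‖ ^ 2))⁻¹) := by positivity
  by_cases hz : z = 0
  · refine le_trans ?_ hrhs
    simp [hz, hk]
  by_cases hza : z - a = 0
  · refine le_trans ?_ hrhs
    simp [hza, hk]
  refine real_bound ‖z‖ ‖z - a‖ ‖a‖ _ (norm_pos_iff.2 hz) (norm_pos_iff.2 hza)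
    (norm_pos_iff.2 ha) (abs_nonneg _) ?_ (hk_bound1 a z) (hk_bound2 a z)
  calc ‖a‖ = ‖z - (z - a)‖ := by congr 1; ring
    _ ≤ _ := norm_sub_le _ _

lemma hk_int (p q : ℂ) : Integrable (hk p q) := by
  have := (hk_int0 (p - q)).comp_sub_right q
  refine this.congr (Filter.Eventually.of_forall fun z => ?_)
  simp only [← hk_shift]
  simp

lemma re_null (c : ℝ) : volume {z : ℂ | z.re = c} = 0 := by
  have h := Complex.volume_preserving_equiv_real_prod.measure_preimage
    (s := ({c} : Set ℝ) ×ˢ Set.univ) ((measurableSet_singleton c).prod MeasurableSet.univ).nullMeasurableSet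
  rw [Measure.volume_eq_prod, Measure.prod_prod, Real.volume_singleton, zero_mul] at h
  rw [← h]; congr 1; ext z; simp [Complex.measurableEquivRealProd]

lemma im_null (c : ℝ) : volume {z : ℂ | z.im = c} = 0 := by
  have h := Complex.volume_preserving_equiv_real_prod.measure_preimage
    (s := (Set.univ : Set ℝ) ×ˢ {c}) (MeasurableSet.univ.prod (measurableSet_singleton c)).nullMeasurableSet
  rw [Measure.volume_eq_prod, Measure.prod_prod, Real.volume_singleton, mul_zero] at h
  rw [← h]; congr 1; ext z; simp [Complex.measurableEquivRealProd]

lemma H_meas : MeasurableSet {z : ℂ | 0 < z.im} :=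
  measurableSet_lt measurable_const Complex.measurable_im

/-- folding -/
lemma fold_zero (p q : ℂ) :
    ∫ z in {z : ℂ | 0 < z.im}, (hk p q z - hk (conj p) (conj q) z) = 0 := by
  have e1 : ∫ z in {z : ℂ | 0 < z.im}, hk p q (conj z)
      = ∫ z in {z : ℂ | 0 < z.im}ᶜ, hk p q z := by
    have h := Complex.conjLIE.measurePreserving.setIntegral_preimage_emb
      Complex.conjLIE.toHomeomorph.measurableEmbedding (hk p q) {z : ℂ | z.im < 0}
    have h3 : (⇑Complex.conjLIE ⁻¹' {z : ℂ | z.im < 0}) = {z : ℂ | 0 < z.im} := by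
      ext z; simp
    rw [h3] at h
    refine Eq.trans (Eq.trans ?_ h) ?_
    · rfl
    · apply setIntegral_congr_set
      have : ∀ᵐ z : ℂ, z.im ≠ 0 := by
        rw [ae_iff]; simpa using im_null 0
      filter_upwards [this] with z hz
      apply propext
      change z.im < 0 ↔ ¬ (0 < z.im)
      rw [not_lt]
      exact ⟨le_of_lt, fun h => lt_of_le_of_ne h hz⟩
  have e2 : ∀ z, hk p q z - hk (conj p) (conj q) z = hk p q z + hk p q (conj z) := by
    intro z; rw [hk_conj]; ring
  have hi : Integrable (fun z => hk p q (conj z)) := by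
    simp only [hk_conj]; exact (hk_int _ _).neg
  simp only [e2]
  rw [integral_add (hk_int p q).integrableOn hi.integrableOn, e1,
    integral_add_compl H_meas (hk_int p q), hk_integral]

/-- derivative of the argument of a holomorphic function -/
lemma arg_fderiv (q : ℂ → ℂ) (q' z v : ℂ) (hq : HasDerivAt q q' z) (hs : q z ∈ Complex.slitPlane) :
    fderiv ℝ (fun z => (1 / (2 * Real.pi)) * Complex.arg (q z)) z v
      = (1 / (2 * Real.pi)) * (v * (q' / q z)).im := by
  have h1 := ((hq.clog hs).hasFDerivAt.restrictScalars ℝ)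
  have h2 := (Complex.imCLM.hasFDerivAt.comp z h1).const_mul (1 / (2 * Real.pi))
  have h3 : (fun z => (1 / (2 * Real.pi)) * Complex.arg (q z)) =
    (fun z => (1 / (2 * Real.pi)) * (Complex.imCLM ∘ fun t => Complex.log (q t)) z) := by
    funext z; simp [Complex.log_im]
  rw [h3, h2.fderiv]
  simp

lemma angle1 (z₁ z v : ℂ) (h1 : 0 < z₁.im) (hz : 0 < z.im) (hre : z.re ≠ z₁.re) :
    fderiv ℝ (fun z => hyperbolicAngle z₁ z) z v
      = (1 / (2 * Real.pi)) * (v * (1 / (z - z₁) - 1 / (z - conj z₁))).im := by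
  have n1 : z - z₁ ≠ 0 := fun h => hre (by simpa [sub_eq_zero] using congrArg Complex.re h)
  have n2 : z - conj z₁ ≠ 0 := fun h => hre (by simpa [sub_eq_zero] using congrArg Complex.re h)
  have n1' : z₁ - z ≠ 0 := fun h => n1 (by linear_combination -h)
  have n2' : conj z₁ - z ≠ 0 := fun h => n2 (by linear_combination -h)
  have hd := (((hasDerivAt_id z).const_sub z₁).div ((hasDerivAt_id z).const_sub (conj z₁)) n2')
  have hs : (z₁ - z) / (conj z₁ - z) ∈ Complex.slitPlane := by
    rw [Complex.mem_slitPlane_iff]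
    right
    have hN : 0 < Complex.normSq (conj z₁ - z) := Complex.normSq_pos.2 n2'
    rw [Complex.div_im, ← sub_div]
    refine div_ne_zero ?_ hN.ne'
    simp only [Complex.sub_im, Complex.sub_re, Complex.conj_re, Complex.conj_im]
    have : z₁.im * (z.re - z₁.re) ≠ 0 := mul_ne_zero h1.ne' (sub_ne_zero.2 hre)
    intro h
    apply this
    linarith
  have := arg_fderiv _ _ z v hd hs
  unfold hyperbolicAngle
  refine this.trans ?_
  congr 3
  simp only [id, Pi.div_apply]
  field_simp
  ring

lemma angle2 (z₂ z v : ℂ) (hz : 0 < z.im) (hre : z.re ≠ z₂.re) :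
    fderiv ℝ (fun z => hyperbolicAngle z z₂) z v
      = (1 / (2 * Real.pi)) * (v * (1 / (z - z₂) + 1 / (z - conj z₂))).im := by
  have n1 : z - z₂ ≠ 0 := fun h => hre (by simpa [sub_eq_zero] using congrArg Complex.re h)
  have n2 : z - conj z₂ ≠ 0 := fun h => hre (by simpa [sub_eq_zero] using congrArg Complex.re h)
  have hd := (((hasDerivAt_id z).sub_const z₂).mul ((hasDerivAt_id z).sub_const (conj z₂)))
  have hs : (z - z₂) * (z - conj z₂) ∈ Complex.slitPlane := by
    rw [Complex.mem_slitPlane_iff]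
    right
    rw [Complex.mul_im]
    simp only [Complex.sub_im, Complex.sub_re, Complex.conj_re, Complex.conj_im]
    have : z.im * (z.re - z₂.re) ≠ 0 := mul_ne_zero hz.ne' (sub_ne_zero.2 hre)
    intro h
    apply this
    linarith
  have := arg_fderiv _ _ z v hd hs
  have hf : (fun z => hyperbolicAngle z z₂) =
      fun z => (1 / (2 * Real.pi)) * Complex.arg ((z - z₂) * (z - conj z₂)) := by
    funext w
    unfold hyperbolicAngle
    congr 1
    by_cases hw : w - conj z₂ = 0
    · have : conj w - z₂ = 0 := by
        have := congrArg conj hw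
        simpa using this
      simp [this, hw]
    · have hw' : conj w - z₂ ≠ 0 := by
        intro h
        apply hw
        have := congrArg conj h
        simpa using this
      have hN : 0 < (Complex.normSq (conj w - z₂))⁻¹ := inv_pos.2 (Complex.normSq_pos.2 hw')
      rw [← Complex.arg_real_mul ((w - z₂) * (w - conj z₂)) hN]
      congr 1
      rw [div_eq_mul_inv, Complex.inv_def]
      simp only [map_sub, Complex.conj_conj]
      ring
  rw [hf]
  refine this.trans ?_
  congr 3
  simp only [id, Pi.mul_apply]
  field_simp

lemma wedge_eq (z₁ z₂ z : ℂ) (h1 : 0 < z₁.im) (hz : 0 < z.im) (hre : z.re ≠ z₁.re)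
    (hre2 : z.re ≠ z₂.re) :
    wedgeCoeff (fun z => hyperbolicAngle z₁ z) (fun z => hyperbolicAngle z z₂) z
      = (1 / (2 * Real.pi)) ^ 2 * ((hk z₁ z₂ z - hk (conj z₁) (conj z₂) z)
        + (hk z₁ (conj z₂) z - hk (conj z₁) (conj (conj z₂)) z)) := by
  unfold wedgeCoeff
  rw [angle1 z₁ z _ h1 hz hre, angle1 z₁ z _ h1 hz hre, angle2 z₂ z _ hz hre2,
    angle2 z₂ z _ hz hre2]
  have key : ∀ A B : ℂ, (1 * A).im * (Complex.I * B).im - (Complex.I * A).im * (1 * B).im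
      = (A * conj B).im := by
    intro A B; simp; ring
  have k2 := key (1 / (z - z₁) - 1 / (z - conj z₁)) (1 / (z - z₂) + 1 / (z - conj z₂))
  have k3 : ((1 / (z - z₁) - 1 / (z - conj z₁)) * conj (1 / (z - z₂) + 1 / (z - conj z₂))).im
      = (hk z₁ z₂ z - hk (conj z₁) (conj z₂) z)
        + (hk z₁ (conj z₂) z - hk (conj z₁) (conj (conj z₂)) z) := by
    unfold hk
    rw [← Complex.sub_im, ← Complex.sub_im, ← Complex.add_im]
    congr 1
    simp only [one_div, mul_inv, map_add, map_inv₀]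
    simp only [map_sub, Complex.conj_conj]
    ring
  rw [← k3, ← k2]
  ring

lemma main_aux (z₁ z₂ : ℂ) (h1 : 0 < z₁.im) (T : Set ℂ)
    (hT : ∀ z ∈ T, z.re = z₁.re ∨ z.re = z₂.re) :
    ∫ z in {z : ℂ | 0 < z.im} \ T,
      wedgeCoeff (fun z => hyperbolicAngle z₁ z) (fun z => hyperbolicAngle z z₂) z = 0 := by
  have a1 : ∀ᵐ z : ℂ, z.re ≠ z₁.re := by
    rw [ae_iff]; simpa using re_null z₁.re
  have a2 : ∀ᵐ z : ℂ, z.re ≠ z₂.re := by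
    rw [ae_iff]; simpa using re_null z₂.re
  have hset : ({z : ℂ | 0 < z.im} \ T : Set ℂ) =ᵐ[volume] {z : ℂ | 0 < z.im} := by
    filter_upwards [a1, a2] with z b1 b2
    apply propext
    change (0 < z.im ∧ z ∉ T) ↔ 0 < z.im
    refine ⟨And.left, fun h => ⟨h, fun hz => ?_⟩⟩
    rcases hT z hz with h | h
    exacts [b1 h, b2 h]
  rw [setIntegral_congr_set hset]
  rw [setIntegral_congr_ae (g := fun z => (1 / (2 * Real.pi)) ^ 2 *
    ((hk z₁ z₂ z - hk (conj z₁) (conj z₂) z)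
        + (hk z₁ (conj z₂) z - hk (conj z₁) (conj (conj z₂)) z))) H_meas ?_]
  · rw [integral_const_mul, integral_add, fold_zero, fold_zero]
    · simp
    · exact ((hk_int _ _).sub (hk_int _ _)).integrableOn
    · exact ((hk_int _ _).sub (hk_int _ _)).integrableOn
  · filter_upwards [a1, a2] with z b1 b2 hz
    exact wedge_eq z₁ z₂ z h1 hz b1 b2

/-- **Kontsevich's vanishing lemmas.**
(1) For distinct `z₁, z₂` in the open upper half-plane `ℍ⁺`,
    `∫_{z ∈ ℍ⁺ ∖ {z₁,z₂}} dφ(z₁,z) ∧ dφ(z,z₂) = 0`.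
(2) For `z₁ ∈ ℍ⁺` and `z₂ ∈ ℝ = ∂ℍ⁺`,
    `∫_{z ∈ ℍ⁺ ∖ {z₁}} dφ(z₁,z) ∧ dφ(z,z₂) = 0`.
(3) For `z₀ ∈ ℍ⁺`, `∫_{z ∈ ℍ⁺ ∖ {z₀}} dφ(z₀,z) ∧ dφ(z,z₀) = 0`. -/
theorem kontsevich_vanishing_lemmas :
    (∀ z₁ z₂ : ℂ, 0 < z₁.im → 0 < z₂.im → z₁ ≠ z₂ →
      ∫ z in {z : ℂ | 0 < z.im} \ {z₁, z₂},
        wedgeCoeff (fun z => hyperbolicAngle z₁ z) (fun z => hyperbolicAngle z z₂) z = 0) ∧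
    (∀ z₁ z₂ : ℂ, 0 < z₁.im → z₂.im = 0 →
      ∫ z in {z : ℂ | 0 < z.im} \ {z₁},
        wedgeCoeff (fun z => hyperbolicAngle z₁ z) (fun z => hyperbolicAngle z z₂) z = 0) ∧
    (∀ z₀ : ℂ, 0 < z₀.im →
      ∫ z in {z : ℂ | 0 < z.im} \ {z₀},
        wedgeCoeff (fun z => hyperbolicAngle z₀ z) (fun z => hyperbolicAngle z z₀) z = 0) := by
  refine ⟨fun z₁ z₂ h1 _ _ => main_aux z₁ z₂ h1 _ ?_, fun z₁ z₂ h1 _ => main_aux z₁ z₂ h1 _ ?_,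
    fun z₀ h => main_aux z₀ z₀ h _ ?_⟩
  · rintro z (rfl | rfl) <;> simp
  · rintro z rfl; simp
  · rintro z rfl; simp
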